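/- Fix c̄ > 0, set c = −c̄, and fix an integer N ≥ 1. Let λ_j(δ) = i(c̄/2)(N+1−2j) + iδ_j for j = 1,…,N, and let μ_1,…,μ_N be fixed complex numbers with μ_m² + (c̄²/4)(N−1)² ≠ 0 for all m and μ_k ∉ {i(c̄/2)(N+1−2j) : j = 1,…,N}. Let λ_p, λ_s be fixed admissible auxiliary parameters. Then, as (δ_1,…,δ_N) → 0 in ℂ^N through values for which the expression is defined, F(μ_1,…,μ_N; λ_1(δ),…,λ_N(δ); λ_p,λ_s) → (−1)^N·(c^{2(N−1)}/6)·[P_μ⁴ − 4P_μQ_μ + 3(E_μ + (c̄²/12)N(N²−1))²]·N·[(N−1)!]² / ∏_{m=1}^{N}(μ_m² + (c̄²/4)(N−1)²), where P_μ = Σ_m μ_m, E_μ = Σ_m μ_m², Q_μ = Σ_m μ_m³. -/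

import Mathlib

open Complex Finset Matrix

namespace LL

noncomputable def Kk (c x y : ℂ) : ℂ := 2 * c / ((x - y) ^ 2 + c ^ 2)

noncomputable def Vp {N M : ℕ} (c : ℂ) (μ : Fin N → ℂ) (lam : Fin M → ℂ) (x : ℂ) : ℂ :=
  (∏ m, (μ m - x + I * c)) / ∏ m, (lam m - x + I * c)

noncomputable def Vm {N M : ℕ} (c : ℂ) (μ : Fin N → ℂ) (lam : Fin M → ℂ) (x : ℂ) : ℂ :=
  (∏ m, (μ m - x - I * c)) / ∏ m, (lam m - x - I * c)

noncomputable def Xi {N M : ℕ} (μ : Fin N → ℂ) (lam : Fin M → ℂ) (j : Fin M) : ℂ :=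
  (∏ m, (μ m - lam j)) / ∏ m ∈ Finset.univ.erase j, (lam m - lam j)

noncomputable def Umat {N M : ℕ} (c : ℂ) (μ : Fin N → ℂ) (lam : Fin M → ℂ) (lp ls : ℂ) :
    Matrix (Fin M) (Fin M) ℂ := fun j k =>
  I / (Vp c μ lam (lam j) - Vm c μ lam (lam j)) * Xi μ lam j *
    (Kk c (lam j) (lam k) - Kk c lp (lam k) * Kk c ls (lam j))

noncomputable def U1mat {N M : ℕ} (c : ℂ) (μ : Fin N → ℂ) (lam : Fin M → ℂ) (lp : ℂ) :
    Matrix (Fin M) (Fin M) ℂ := fun j k =>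
  I / (Vp c μ lam (lam j) - Vm c μ lam (lam j)) * Xi μ lam j *
    (Kk c (lam j) (lam k) - Kk c lp (lam k))

noncomputable def U2mat {N M : ℕ} (c : ℂ) (μ : Fin N → ℂ) (lam : Fin M → ℂ) (lp : ℂ) :
    Matrix (Fin M) (Fin M) ℂ := fun j k =>
  U1mat c μ lam lp j k + I / (Vp c μ lam (lam j) - Vm c μ lam (lam j)) * Kk c lp (lam k)

noncomputable def HR {N M : ℕ} (c sc : ℂ) (R : ℕ) (μ : Fin N → ℂ) (lam : Fin M → ℂ)
    (lp ls : ℂ) : ℂ :=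
  (I * sc) ^ R / (c ^ (2 * R - 1) * ((R - 1).factorial : ℂ)) * (-1 : ℂ) ^ (N * (R - 1)) *
    (∏ j, ∏ k, (lam j - lam k + I * c)) *
    (∏ j, ∏ k, (lam j - μ k)⁻¹) *
    (∏ j, (Vp c μ lam (lam j) - Vm c μ lam (lam j))) *
    (1 + Umat c μ lam lp ls).det /
    ((Vp c μ lam lp - Vm c μ lam lp) * (Vp c μ lam ls - Vm c μ lam ls))

noncomputable def Jcal {N : ℕ} (μ lam : Fin N → ℂ) : ℂ :=
  (∑ j, lam j - ∑ j, μ j) ^ 4 -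
    4 * (∑ j, lam j - ∑ j, μ j) * (∑ j, lam j ^ 3 - ∑ j, μ j ^ 3) +
    3 * (∑ j, lam j ^ 2 - ∑ j, μ j ^ 2) ^ 2

noncomputable def Fff {N : ℕ} (c : ℂ) (μ lam : Fin N → ℂ) (lp ls : ℂ) : ℂ :=
  (-1 : ℂ) ^ N * (Jcal μ lam / (6 * c)) *
    (∏ j, ∏ k, (lam j - lam k + I * c)) *
    (∏ j, ∏ k, (lam j - μ k)⁻¹) *
    (∏ j, (Vp c μ lam (lam j) - Vm c μ lam (lam j))) *
    (1 + Umat c μ lam lp ls).det /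
    ((Vp c μ lam lp - Vm c μ lam lp) * (Vp c μ lam ls - Vm c μ lam ls))

noncomputable def Tcal {N M : ℕ} (μ : Fin N → ℂ) (lam : Fin M → ℂ) : ℂ :=
  (1 / 2 : ℂ) * ((∑ j, lam j - ∑ j, μ j) ^ 2 - (∑ j, lam j ^ 2 - ∑ j, μ j ^ 2))

noncomputable def Gff {N M : ℕ} (c sc : ℂ) (μ : Fin N → ℂ) (lam : Fin M → ℂ) (lp ls : ℂ) : ℂ :=
  -I * (Tcal μ lam / (c * sc)) *
    (∏ j, ∏ k, (lam j - lam k + I * c)) *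
    (∏ j, ∏ k, (lam j - μ k)⁻¹) *
    (∏ j, (Vp c μ lam (lam j) - Vm c μ lam (lam j))) *
    (1 + Umat c μ lam lp ls).det /
    ((Vp c μ lam lp - Vm c μ lam lp) * (Vp c μ lam ls - Vm c μ lam ls))

noncomputable def fsc (c x y : ℂ) : ℂ := (x - y + I * c) / (x - y)

noncomputable def stringRap (cb : ℝ) (M : ℕ) (δ : Fin M → ℂ) (j : Fin M) : ℂ :=
  I * ((cb : ℂ) / 2) * ((M : ℂ) - 1 - 2 * (j.val : ℂ)) + I * δ j

end LL

open LL

lemma pf {N : ℕ} (μ lam : Fin N → ℂ) (hinj : Function.Injective lam) (z : ℂ)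
    (hz : ∀ j, lam j - z ≠ 0) :
    (∏ m, (μ m - z)) / ∏ m, (lam m - z) = 1 + ∑ j, Xi μ lam j / (lam j - z) := by
  classical
  set P : Polynomial ℂ := (∏ m, (Polynomial.X - Polynomial.C (μ m))) -
    ∏ m, (Polynomial.X - Polynomial.C (lam m)) with hP
  have hm : ∀ f : Fin N → ℂ, (∏ m, (Polynomial.X - Polynomial.C (f m))).Monic :=
    fun f => Polynomial.monic_prod_of_monic _ _ (fun i _ => Polynomial.monic_X_sub_C _)
  have hdg : ∀ f : Fin N → ℂ, (∏ m, (Polynomial.X - Polynomial.C (f m))).degree = (N : WithBot ℕ) := by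
    intro f
    rw [Polynomial.degree_prod]
    simp
  have hdeg : P.degree < (Finset.univ : Finset (Fin N)).card := by
    rw [Finset.card_univ, Fintype.card_fin]
    rw [← hdg μ]
    apply Polynomial.degree_sub_lt_left
    · rw [hdg, hdg]
    · exact (hm _).ne_zero
    · rw [(hm _).leadingCoeff, (hm _).leadingCoeff]
  have hint := Lagrange.eq_interpolate (s := Finset.univ) (v := lam) (f := P) hinj.injOn hdeg
  have hev := congrArg (Polynomial.eval z) hint
  rw [Lagrange.eval_interpolate_not_at_node] at hev
  swap
  · intro i _ h
    exact hz i (by rw [h]; ring)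
  have hsw : ∀ (f : Fin N → ℂ) (x : ℂ), ∏ m, (f m - x) = (-1) ^ N * ∏ m, (x - f m) := by
    intro f x
    rw [show ((-1 : ℂ)) ^ N = ∏ _m : Fin N, (-1 : ℂ) by simp, ← Finset.prod_mul_distrib]
    exact Finset.prod_congr rfl (fun _ _ => by ring)
  have hne : ∏ m, (lam m - z) ≠ 0 := Finset.prod_ne_zero_iff.2 (fun j _ => hz j)
  have hevj : ∀ j, Polynomial.eval (lam j) P = ∏ m, (lam j - μ m) := by
    intro j
    simp only [hP, Polynomial.eval_sub, Polynomial.eval_prod, Polynomial.eval_X, Polynomial.eval_C]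
    rw [Finset.prod_eq_zero (s := Finset.univ) (i := j) (f := fun m => lam j - lam m) (by simp) (by simp)]
    ring
  rw [Lagrange.eval_nodal] at hev
  simp only [hevj] at hev
  simp only [hP, Polynomial.eval_sub, Polynomial.eval_prod, Polynomial.eval_X, Polynomial.eval_C] at hev
  have h1 : ∀ j, Lagrange.nodalWeight Finset.univ lam j * (z - lam j)⁻¹ * ∏ m, (lam j - μ m)
      = Xi μ lam j / (lam j - z) := by
    intro j
    have hN : 0 < N := Fin.pos j
    unfold Xi Lagrange.nodalWeight
    rw [hsw μ (lam j), Finset.prod_inv_distrib]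
    have : ∏ m ∈ Finset.univ.erase j, (lam m - lam j)
        = (-1) ^ (N - 1) * ∏ m ∈ Finset.univ.erase j, (lam j - lam m) := by
      rw [show ((-1 : ℂ)) ^ (N-1) = ∏ _m ∈ (Finset.univ.erase j : Finset (Fin N)), (-1 : ℂ) by simp,
        ← Finset.prod_mul_distrib]
      exact Finset.prod_congr rfl (fun _ _ => by ring)
    rw [this]
    have e1 : ((-1 : ℂ)) ^ N = (-1) ^ (N-1) * (-1) := by
      rw [← pow_succ]; congr 1; omega
    have e2 : ((-1 : ℂ)) ^ (N-1) ≠ 0 := by simp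
    have e3 : (z - lam j)⁻¹ = - (lam j - z)⁻¹ := by rw [← inv_neg]; congr 1; ring
    rw [e1, e3, div_div, mul_assoc, mul_assoc, mul_assoc, mul_div_mul_left _ _ e2]
    rw [div_eq_mul_inv, mul_inv]
    ring
  simp only [h1] at hev
  rw [div_eq_iff hne, hsw μ, hsw lam]
  linear_combination ((-1 : ℂ) ^ N) * hev

lemma sumK {N : ℕ} (c : ℂ) (hc : c ≠ 0) (μ lam : Fin N → ℂ) (hinj : Function.Injective lam) (z : ℂ)
    (h1 : ∀ j, lam j - z + I * c ≠ 0) (h2 : ∀ j, lam j - z - I * c ≠ 0) :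
    ∑ j, Xi μ lam j * Kk c (lam j) z = I * (Vp c μ lam z - Vm c μ lam z) := by
  have hp := pf μ lam hinj (z - I * c) (fun j => by convert h1 j using 1; ring)
  have hm := pf μ lam hinj (z + I * c) (fun j => by convert h2 j using 1; ring)
  have ep : Vp c μ lam z = 1 + ∑ j, Xi μ lam j / (lam j - z + I * c) := by
    unfold Vp
    convert hp using 2
    · exact Finset.prod_congr rfl (fun _ _ => by ring)
    · exact Finset.prod_congr rfl (fun _ _ => by ring)
    · exact Finset.sum_congr rfl (fun _ _ => by congr 1; ring)
  have em : Vm c μ lam z = 1 + ∑ j, Xi μ lam j / (lam j - z - I * c) := by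
    unfold Vm
    convert hm using 2
    · exact Finset.prod_congr rfl (fun _ _ => by ring)
    · exact Finset.prod_congr rfl (fun _ _ => by ring)
    · exact Finset.sum_congr rfl (fun _ _ => by congr 1; ring)
  rw [ep, em, add_sub_add_left_eq_sub, ← Finset.sum_sub_distrib, Finset.mul_sum]
  refine Finset.sum_congr rfl (fun j _ => ?_)
  have hk : (lam j - z) ^ 2 + c ^ 2 = (lam j - z + I * c) * (lam j - z - I * c) := by
    linear_combination (c ^ 2) * I_sq
  unfold Kk
  rw [hk]
  rw [div_sub_div _ _ (h1 j) (h2 j), mul_div_assoc', mul_div_assoc']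
  congr 1
  linear_combination (2 * c * Xi μ lam j) * I_sq

lemma Kk_symm (c x y : ℂ) : Kk c x y = Kk c y x := by
  unfold Kk; congr 2; ring

lemma fac_ne {c x y : ℂ} (h : (x - y) ^ 2 + c ^ 2 ≠ 0) : y - x + I * c ≠ 0 ∧ y - x - I * c ≠ 0 := by
  have hk : (x - y) ^ 2 + c ^ 2 = (y - x + I * c) * (y - x - I * c) := by
    linear_combination (c ^ 2) * I_sq
  rw [hk] at h
  exact ⟨left_ne_zero_of_mul h, right_ne_zero_of_mul h⟩

noncomputable def Am {N : ℕ} (c : ℂ) (μ lam : Fin N → ℂ) (lp ls : ℂ) (i k : Fin N) : ℂ :=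
  I * Xi μ lam i * (Kk c (lam i) (lam k) - Kk c lp (lam k) * Kk c ls (lam i))

noncomputable def Bm {n : ℕ} (c : ℂ) (μ lam : Fin (n+1) → ℂ) (lp ls : ℂ) :
    Matrix (Fin (n+1)) (Fin (n+1)) ℂ := fun j k =>
  if j = Fin.last n then (if k = Fin.last n then I else Kk c lp (lam k))
  else if k = Fin.last n then ∑ i, (if i ≤ j then Xi μ lam i * Kk c ls (lam i) else 0)
  else if k ≤ j then (Vp c μ lam ls - Vm c μ lam ls) * Kk c lp (lam k) -
      ∑ i, (if j < i then Am c μ lam lp ls i k else 0)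
  else ∑ i, (if i ≤ j then Am c μ lam lp ls i k else 0)

lemma exact_det {n : ℕ} (c : ℂ) (hc : c ≠ 0) (μ lam : Fin (n+1) → ℂ) (lp ls : ℂ)
    (hinj : Function.Injective lam)
    (h3 : ∀ j k, lam j - lam k + I * c ≠ 0 ∧ lam j - lam k - I * c ≠ 0)
    (h4 : ∀ j, Vp c μ lam (lam j) ≠ Vm c μ lam (lam j))
    (hp : ∀ j, (lp - lam j) ^ 2 + c ^ 2 ≠ 0)
    (hs : ∀ j, (ls - lam j) ^ 2 + c ^ 2 ≠ 0) :
    Xi μ lam (Fin.last n) * ((∏ j, (Vp c μ lam (lam j) - Vm c μ lam (lam j))) *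
      (1 + Umat c μ lam lp ls).det) =
    (Vp c μ lam ls - Vm c μ lam ls) * (Vp c μ lam lp - Vm c μ lam lp) *
      (Bm c μ lam lp ls).det := by
  classical
  set D : Fin (n+1) → ℂ := fun j => Vp c μ lam (lam j) - Vm c μ lam (lam j) with hD
  set Ds := Vp c μ lam ls - Vm c μ lam ls with hDs
  set Dp := Vp c μ lam lp - Vm c μ lam lp with hDp
  set X := Xi μ lam with hX
  set A := Am c μ lam lp ls with hA
  have f0 : ∀ k, ∑ i, X i * Kk c (lam i) (lam k) = I * D k := fun k =>
    sumK c hc μ lam hinj (lam k) (fun j => (h3 j k).1) (fun j => (h3 j k).2)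
  have fs : ∑ i, X i * Kk c ls (lam i) = I * Ds := by
    rw [hDs, ← sumK c hc μ lam hinj ls (fun j => (fac_ne (hs j)).1) (fun j => (fac_ne (hs j)).2)]
    exact Finset.sum_congr rfl (fun i _ => by rw [Kk_symm])
  have fp : ∑ i, X i * Kk c lp (lam i) = I * Dp := by
    rw [hDp, ← sumK c hc μ lam hinj lp (fun j => (fac_ne (hp j)).1) (fun j => (fac_ne (hp j)).2)]
    exact Finset.sum_congr rfl (fun i _ => by rw [Kk_symm])
  have g1 : ∀ k, D k + ∑ i, A i k = Ds * Kk c lp (lam k) := by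
    intro k
    have : ∑ i, A i k = I * (∑ i, X i * Kk c (lam i) (lam k)) -
        I * Kk c lp (lam k) * ∑ i, X i * Kk c ls (lam i) := by
      rw [Finset.mul_sum, Finset.mul_sum, ← Finset.sum_sub_distrib]
      exact Finset.sum_congr rfl (fun i _ => by rw [hA, Am]; ring)
    rw [this, f0, fs]
    linear_combination (D k - Kk c lp (lam k) * Ds) * I_sq
  have g2 : ∀ j, D j * X j + ∑ k, A j k * X k = Dp * (X j * Kk c ls (lam j)) := by
    intro j
    have : ∑ k, A j k * X k = I * X j * (∑ i, X i * Kk c (lam i) (lam j)) -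
        I * X j * Kk c ls (lam j) * ∑ i, X i * Kk c lp (lam i) := by
      rw [Finset.mul_sum, Finset.mul_sum, ← Finset.sum_sub_distrib]
      exact Finset.sum_congr rfl (fun i _ => by rw [hA, Am, Kk_symm c (lam i)]; ring)
    rw [this, f0, fp]
    linear_combination (X j * D j - X j * Kk c ls (lam j) * Dp) * I_sq
  set M : Matrix (Fin (n+1)) (Fin (n+1)) ℂ := fun i k => (if i = k then D i else 0) + A i k with hM
  have hMdet : (∏ j, D j) * (1 + Umat c μ lam lp ls).det = M.det := by
    rw [← Matrix.det_mul_column]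
    congr 1
    ext i k
    have hd : D i ≠ 0 := sub_ne_zero.2 (h4 i)
    simp only [Matrix.of_apply, Matrix.add_apply, Matrix.one_apply, Umat, hM, hA, Am]
    change D i * (_ + I / D i * _ * _) = _
    split_ifs <;> field_simp <;> simp
  set L : Matrix (Fin (n+1)) (Fin (n+1)) ℂ := fun j i => if i ≤ j then 1 else 0 with hL
  set R : Matrix (Fin (n+1)) (Fin (n+1)) ℂ := fun i k =>
    if k = Fin.last n then X i else if i = k then 1 else 0 with hR
  have hLdet : L.det = 1 := by
    rw [Matrix.det_of_isLowerTriangular]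
    · simp [hL]
    · intro i j hij
      simp only [hL]
      rw [if_neg]
      simpa using hij
  have hRdet : R.det = X (Fin.last n) := by
    rw [Matrix.det_of_isUpperTriangular]
    · rw [Fin.prod_univ_castSucc]
      have : ∀ i : Fin n, R i.castSucc i.castSucc = 1 := by
        intro i
        simp only [hR]
        rw [if_neg (Fin.castSucc_lt_last i).ne]; simp
      simp only [this]
      simp [hR]
    · intro i j hij
      have hij' : j < i := hij
      simp only [hR]
      rw [if_neg (ne_of_lt (lt_of_lt_of_le hij' (Fin.le_last i))), if_neg hij'.ne']
  have key : L * (M * R) = Matrix.of (fun j k => (if j = Fin.last n then Ds else 1) *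
      (Matrix.of (fun j k => (if k = Fin.last n then Dp else 1) * Bm c μ lam lp ls j k)) j k) := by
    ext j k
    simp only [Matrix.of_apply]
    have hMR : ∀ i, (M * R) i k = if k = Fin.last n then Dp * (X i * Kk c ls (lam i)) else M i k := by
      intro i
      rw [Matrix.mul_apply]
      split_ifs with hk
      · rw [← g2]
        simp [hM, hR, hk, add_mul, Finset.sum_add_distrib]
      · simp [hR, hk]
    rw [Matrix.mul_apply]
    simp only [hMR]
    have hcol : ∑ i, M i k = Ds * Kk c lp (lam k) := by
      rw [← g1]; simp [hM, Finset.sum_add_distrib]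
    by_cases hk : k = Fin.last n
    · simp only [hk, if_true]
      by_cases hj : j = Fin.last n
      · have : ∀ x : Fin (n+1), x ≤ Fin.last n := Fin.le_last
        simp only [hj, hL, Bm, if_true, this, one_mul]
        rw [← Finset.mul_sum, fs]; ring
      · simp only [hj, hL, Bm, if_true, if_false, one_mul, Finset.mul_sum]
        exact Finset.sum_congr rfl (fun i _ => by split_ifs <;> simp [hX])
    · simp only [hk, if_false]
      by_cases hj : j = Fin.last n
      · have : ∀ x : Fin (n+1), x ≤ Fin.last n := Fin.le_last
        simp only [hj, hL, Bm, if_true, this, one_mul, hk, if_false]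
        exact hcol
      · simp only [hj, hL, Bm, if_false, one_mul, hk]
        split_ifs with hkj
        · rw [← hDs, ← hcol, eq_sub_iff_add_eq, ← Finset.sum_add_distrib]
          refine Finset.sum_congr rfl (fun i _ => ?_)
          by_cases hi : i ≤ j
          · simp [hi, not_lt.2 hi]
          · have hi' := not_le.1 hi
            have : i ≠ k := fun h => by subst h; exact hi hkj
            simp [hi, hi', hM, this, hA]
        · refine Finset.sum_congr rfl (fun i _ => ?_)
          by_cases hi : i ≤ j
          · have : i ≠ k := fun h => by subst h; exact hkj hi
            simp [hi, hM, this, hA]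
          · simp [hi]
  have hdet := congrArg Matrix.det key
  rw [Matrix.det_mul, Matrix.det_mul, hLdet, hRdet, Matrix.det_mul_column, Matrix.det_mul_row] at hdet
  rw [hMdet]
  simp only [Finset.prod_ite_eq', Finset.mem_univ, if_true] at hdet
  linear_combination hdet

noncomputable def et {n : ℕ} (c : ℂ) (lam : Fin (n+1) → ℂ) (j : Fin (n+1)) : ℂ :=
  ∏ k : Fin (n+1), if (k : ℕ) = j + 1 then lam j - lam k + I * c else 1

noncomputable def Hm {n : ℕ} (c : ℂ) (lam : Fin (n+1) → ℂ) (j k : Fin (n+1)) : ℂ :=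
  if (k : ℕ) = j + 1 then 1 else lam j - lam k + I * c

lemma et_eq {n : ℕ} (c : ℂ) (lam : Fin (n+1) → ℂ) (j k : Fin (n+1)) (h : (k : ℕ) = j + 1) :
    et c lam j = lam j - lam k + I * c := by
  unfold et
  rw [Finset.prod_eq_single k]
  · rw [if_pos h]
  · intro b _ hb
    rw [if_neg]
    intro h'
    exact hb (Fin.ext (by omega))
  · simp

lemma et_last {n : ℕ} (c : ℂ) (lam : Fin (n+1) → ℂ) : et c lam (Fin.last n) = 1 := by
  unfold et
  apply Finset.prod_eq_one
  intro k _
  rw [if_neg]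
  have := k.isLt
  simp only [Fin.val_last]
  omega

lemma exact_F {n : ℕ} (c : ℂ) (hc : c ≠ 0) (μ lam : Fin (n+1) → ℂ) (lp ls : ℂ)
    (hinj : Function.Injective lam)
    (hmu : ∀ k j, μ k ≠ lam j)
    (h3 : ∀ j k, lam j - lam k + I * c ≠ 0 ∧ lam j - lam k - I * c ≠ 0)
    (h4 : ∀ j, Vp c μ lam (lam j) ≠ Vm c μ lam (lam j))
    (h5 : Vp c μ lam lp ≠ Vm c μ lam lp) (h6 : Vp c μ lam ls ≠ Vm c μ lam ls)
    (hp : ∀ j, (lp - lam j) ^ 2 + c ^ 2 ≠ 0)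
    (hs : ∀ j, (ls - lam j) ^ 2 + c ^ 2 ≠ 0) :
    Fff c μ lam lp ls = (-1 : ℂ) ^ (n+1) * (Jcal μ lam / (6 * c)) *
      (∏ j, ∏ k, Hm c lam j k) * (∏ j, ∏ k, (lam j - μ k)⁻¹) *
      (Matrix.of (fun j k => et c lam j * Bm c μ lam lp ls j k)).det / Xi μ lam (Fin.last n) := by
  have h := exact_det c hc μ lam lp ls hinj h3 h4 hp hs
  have hX : Xi μ lam (Fin.last n) ≠ 0 := by
    unfold Xi
    apply div_ne_zero
    · exact Finset.prod_ne_zero_iff.2 (fun m _ => sub_ne_zero.2 (hmu _ _))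
    · refine Finset.prod_ne_zero_iff.2 (fun m hm => sub_ne_zero.2 (fun h => ?_))
      exact (Finset.mem_erase.1 hm).1 (hinj h)
  have h5' := sub_ne_zero.2 h5
  have h6' := sub_ne_zero.2 h6
  have hprod : ∏ j, ∏ k, (lam j - lam k + I * c) = (∏ j, et c lam j) * ∏ j, ∏ k, Hm c lam j k := by
    rw [← Finset.prod_mul_distrib]
    refine Finset.prod_congr rfl (fun j _ => ?_)
    unfold et Hm
    rw [← Finset.prod_mul_distrib]
    refine Finset.prod_congr rfl (fun k _ => ?_)
    split_ifs <;> simp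
  rw [Matrix.det_mul_column]
  unfold Fff
  rw [hprod, div_eq_div_iff (mul_ne_zero h5' h6') hX]
  linear_combination ((-1 : ℂ) ^ (n+1) * (Jcal μ lam / (6 * c)) * (∏ j, et c lam j) * (∏ j, ∏ k, Hm c lam j k) * (∏ j, ∏ k, (lam j - μ k)⁻¹)) * h

open Filter Topology in
lemma lim_det {n : ℕ} {α : Type*} (l : Filter α) (c : ℂ) (hc : c ≠ 0) (μ : Fin (n+1) → ℂ)
    (lam : α → Fin (n+1) → ℂ) (L : Fin (n+1) → ℂ) (lp ls : ℂ)
    (hL : ∀ i k : Fin (n+1), L i - L k = I * c * ((i : ℂ) - k))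
    (hlim : ∀ j, Tendsto (fun x => lam x j) l (𝓝 (L j)))
    (hp : ∀ j, (lp - L j) ^ 2 + c ^ 2 ≠ 0)
    (hs : ∀ j, (ls - L j) ^ 2 + c ^ 2 ≠ 0)
    (h3 : ∀ᶠ x in l, ∀ j k, lam x j - lam x k + I * c ≠ 0 ∧ lam x j - lam x k - I * c ≠ 0) :
    Tendsto (fun x => (Matrix.of (fun j k => et c (lam x) j * Bm c μ (lam x) lp ls j k)).det) l
      (𝓝 (I * ∏ j : Fin n, Xi μ L j.succ)) := by
  have hLinj : ∀ i k, i ≠ k → L i - L k ≠ 0 := by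
    intro i k hik
    rw [hL]
    refine mul_ne_zero (mul_ne_zero I_ne_zero hc) (sub_ne_zero.2 ?_)
    exact_mod_cast fun h => hik (Fin.ext h)
  have tX : ∀ i, Tendsto (fun x => Xi μ (lam x) i) l (𝓝 (Xi μ L i)) := by
    intro i
    unfold Xi
    apply Tendsto.div
    · exact tendsto_finsetProd _ (fun m _ => tendsto_const_nhds.sub (hlim i))
    · exact tendsto_finsetProd _ (fun m _ => (hlim m).sub (hlim i))
    · exact Finset.prod_ne_zero_iff.2 (fun m hm => hLinj _ _ (Finset.mem_erase.1 hm).1)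
  have tK : ∀ (q : ℂ), (∀ j, (q - L j) ^ 2 + c ^ 2 ≠ 0) → ∀ k,
      Tendsto (fun x => Kk c q (lam x k)) l (𝓝 (Kk c q (L k))) := by
    intro q hq k
    unfold Kk
    exact tendsto_const_nhds.div (((tendsto_const_nhds.sub (hlim k)).pow 2).add tendsto_const_nhds) (hq k)
  have tVs : Tendsto (fun x => Vp c μ (lam x) ls - Vm c μ (lam x) ls) l
      (𝓝 (Vp c μ L ls - Vm c μ L ls)) := by
    unfold Vp Vm
    apply Tendsto.sub
    · apply Tendsto.div tendsto_const_nhds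
      · exact tendsto_finsetProd _ (fun m _ => ((hlim m).sub tendsto_const_nhds).add tendsto_const_nhds)
      · exact Finset.prod_ne_zero_iff.2 (fun m hm => (fac_ne (hs m)).1)
    · apply Tendsto.div tendsto_const_nhds
      · exact tendsto_finsetProd _ (fun m _ => ((hlim m).sub tendsto_const_nhds).sub tendsto_const_nhds)
      · exact Finset.prod_ne_zero_iff.2 (fun m hm => (fac_ne (hs m)).2)
  have te : ∀ j : Fin (n+1), j ≠ Fin.last n → Tendsto (fun x => et c (lam x) j) l (𝓝 0) := by
    intro j hj
    have hj' : (j : ℕ) + 1 < n + 1 := by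
      have := Fin.val_lt_last hj
      omega
    have : ∀ x, et c (lam x) j = lam x j - lam x ⟨j+1, hj'⟩ + I * c := fun x => et_eq _ _ _ _ rfl
    simp only [this]
    have h0 : L j - L ⟨j+1, hj'⟩ + I * c = 0 := by
      rw [hL]; push_cast; ring
    rw [← h0]
    exact ((hlim _).sub (hlim _)).add tendsto_const_nhds
  -- the key entry limit
  have tK2 : ∀ j i k : Fin (n+1), j ≠ Fin.last n → (i ≤ j ∧ j < k ∨ k ≤ j ∧ j < i) →
      Tendsto (fun x => et c (lam x) j * Kk c (lam x i) (lam x k)) l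
        (𝓝 (if (i : ℕ) = k + 1 ∨ (k : ℕ) = i + 1 then I else 0)) := by
    intro j i k hj hijk
    split_ifs with h
    · rcases h with h | h
      · have hkj : k = j := by
          apply Fin.ext
          simp only [Fin.le_def, Fin.lt_def] at hijk
          omega
        subst hkj
        have hz : L k - L i - I * c ≠ 0 := by
          rw [hL, h]; push_cast
          have : I * c * ((k : ℂ) - (k + 1)) - I * c = -2 * (I * c) := by ring
          rw [this]
          exact mul_ne_zero (by norm_num) (mul_ne_zero I_ne_zero hc)
        have hval : (2 * c) / (L k - L i - I * c) = I := by
          rw [div_eq_iff hz, hL, h]; push_cast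
          linear_combination (2 * c) * I_sq
        rw [← hval]
        refine Tendsto.congr' ?_ ((tendsto_const_nhds (x := 2 * c)).div (((hlim k).sub (hlim i)).sub
          (tendsto_const_nhds (x := I * c))) hz)
        filter_upwards [h3] with x hx
        have hx1 := (hx k i).1
        have hx2 := (hx k i).2
        have hk : (lam x i - lam x k) ^ 2 + c ^ 2 =
            (lam x k - lam x i + I * c) * (lam x k - lam x i - I * c) := by
          linear_combination (c ^ 2) * I_sq
        rw [et_eq _ _ _ _ h, Kk, hk]
        simp only [Pi.div_apply]
        rw [mul_div_assoc', mul_div_mul_left _ _ hx1]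
      · have hkj : i = j := by
          apply Fin.ext
          simp only [Fin.le_def, Fin.lt_def] at hijk
          omega
        subst hkj
        have hz : L i - L k - I * c ≠ 0 := by
          rw [hL, h]; push_cast
          have : I * c * ((i : ℂ) - (i + 1)) - I * c = -2 * (I * c) := by ring
          rw [this]
          exact mul_ne_zero (by norm_num) (mul_ne_zero I_ne_zero hc)
        have hval : (2 * c) / (L i - L k - I * c) = I := by
          rw [div_eq_iff hz, hL, h]; push_cast
          linear_combination (2 * c) * I_sq
        rw [← hval]
        refine Tendsto.congr' ?_ ((tendsto_const_nhds (x := 2 * c)).div (((hlim i).sub (hlim k)).sub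
          (tendsto_const_nhds (x := I * c))) hz)
        filter_upwards [h3] with x hx
        have hx1 := (hx i k).1
        have hk : (lam x i - lam x k) ^ 2 + c ^ 2 =
            (lam x i - lam x k + I * c) * (lam x i - lam x k - I * c) := by
          linear_combination (c ^ 2) * I_sq
        rw [et_eq _ _ _ _ h, Kk, hk]
        simp only [Pi.div_apply]
        rw [mul_div_assoc', mul_div_mul_left _ _ hx1]
    · push Not at h
      have hz : (L i - L k) ^ 2 + c ^ 2 ≠ 0 := by
        have hk : (L i - L k) ^ 2 + c ^ 2 = (L i - L k + I * c) * (L i - L k - I * c) := by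
          linear_combination (c ^ 2) * I_sq
        rw [hk, hL]
        have e1 : I * c * ((i : ℂ) - k) + I * c = (I * c) * (((i : ℂ) + 1) - k) := by ring
        have e2 : I * c * ((i : ℂ) - k) - I * c = (I * c) * ((i : ℂ) - (k + 1)) := by ring
        rw [e1, e2]
        have hIc := mul_ne_zero I_ne_zero hc
        refine mul_ne_zero (mul_ne_zero hIc (sub_ne_zero.2 ?_)) (mul_ne_zero hIc (sub_ne_zero.2 ?_))
        · exact_mod_cast h.2.symm
        · exact_mod_cast h.1
      have := (te j hj).mul ((tendsto_const_nhds (x := 2 * c)).div ((((hlim i).sub (hlim k)).pow 2).add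
          (tendsto_const_nhds (x := c ^ 2))) hz)
      rw [zero_mul] at this
      exact this
  have tA : ∀ j i k : Fin (n+1), j ≠ Fin.last n → (i ≤ j ∧ j < k ∨ k ≤ j ∧ j < i) →
      Tendsto (fun x => et c (lam x) j * Am c μ (lam x) lp ls i k) l
        (𝓝 (if (i : ℕ) = k + 1 ∨ (k : ℕ) = i + 1 then - Xi μ L i else 0)) := by
    intro j i k hj hijk
    have h1 := (((tX i).const_mul I).mul (tK2 j i k hj hijk)).sub
      ((te j hj).mul (((tX i).const_mul I).mul ((tK lp hp k).mul (tK ls hs i))))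
    have e1 : I * Xi μ L i * (if (i : ℕ) = k + 1 ∨ (k : ℕ) = i + 1 then I else 0) -
        0 * (I * Xi μ L i * (Kk c lp (L k) * Kk c ls (L i))) =
        (if (i : ℕ) = k + 1 ∨ (k : ℕ) = i + 1 then - Xi μ L i else 0) := by
      split_ifs
      · linear_combination (Xi μ L i) * I_sq
      · ring
    rw [e1] at h1
    refine h1.congr (fun x => ?_)
    unfold Am
    ring
  -- limit matrix
  set B0 : Matrix (Fin (n+1)) (Fin (n+1)) ℂ := fun j k =>
    if j = Fin.last n then (if k = Fin.last n then I else Kk c lp (L k))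
    else if k = Fin.last n then 0
    else if k ≤ j then
      - ∑ i, (if j < i then (if (i : ℕ) = k + 1 ∨ (k : ℕ) = i + 1 then - Xi μ L i else 0) else 0)
    else ∑ i, (if i ≤ j then (if (i : ℕ) = k + 1 ∨ (k : ℕ) = i + 1 then - Xi μ L i else 0) else 0)
    with hB0
  have hB0det : B0.det = I * ∏ j : Fin n, Xi μ L j.succ := by
    rw [Matrix.det_succ_column B0 (Fin.last n), Finset.sum_eq_single (Fin.last n)]
    · have : B0 (Fin.last n) (Fin.last n) = I := by simp [hB0]
      rw [this, Matrix.det_of_isUpperTriangular]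
      · rw [← two_mul, pow_mul]
        simp only [even_two, Even.neg_pow, one_pow, one_mul, Matrix.submatrix_apply, Fin.succAbove_last]
        congr 1
        refine Finset.prod_congr rfl (fun j _ => ?_)
        simp only [hB0]
        rw [if_neg (Fin.castSucc_lt_last j).ne, if_neg (Fin.castSucc_lt_last j).ne, if_pos le_rfl,
          Finset.sum_eq_single j.succ]
        · simp
        · intro b _ hb
          have hb' : (b : ℕ) ≠ j + 1 := fun h => hb (Fin.ext (by simpa using h))
          split_ifs with h1 h2
          · simp only [Fin.lt_def, Fin.val_castSucc] at h1 h2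
            omega
          · rfl
          · rfl
        · simp
      · intro i j hij
        have hij' : j < i := hij
        simp only [Matrix.submatrix_apply, Fin.succAbove_last]
        simp only [hB0]
        rw [if_neg (Fin.castSucc_lt_last i).ne, if_neg (Fin.castSucc_lt_last j).ne,
          if_pos (by simpa using hij'.le)]
        rw [Finset.sum_eq_zero, neg_zero]
        intro b _
        split_ifs with h1 h2
        · simp only [Fin.lt_def, Fin.val_castSucc] at h1 h2 hij'
          omega
        · rfl
        · rfl
    · intro b _ hb
      simp [hB0, hb]
    · simp
  rw [← hB0det]
  have hcont : Continuous (fun A : Matrix (Fin (n+1)) (Fin (n+1)) ℂ => A.det) :=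
    Continuous.matrix_det continuous_id
  refine (hcont.tendsto B0).comp ?_
  refine tendsto_pi_nhds.2 (fun j => tendsto_pi_nhds.2 (fun k => ?_))
  simp only [Matrix.of_apply, hB0, Bm]
  by_cases hj : j = Fin.last n
  · simp only [hj, if_true, et_last, one_mul]
    split_ifs
    · exact tendsto_const_nhds
    · exact tK lp hp k
  · simp only [hj, if_false]
    by_cases hk : k = Fin.last n
    · simp only [hk, if_true]
      have := (te j hj).mul (tendsto_finsetSum (Finset.univ) (fun i _ =>
        show Tendsto (fun x => if i ≤ j then Xi μ (lam x) i * Kk c ls (lam x i) else 0) l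
          (𝓝 (if i ≤ j then Xi μ L i * Kk c ls (L i) else 0)) by
          split_ifs
          · exact (tX i).mul (tK ls hs i)
          · exact tendsto_const_nhds))
      rw [zero_mul] at this
      exact this
    · simp only [hk, if_false]
      by_cases hkj : k ≤ j
      · simp only [hkj, if_true]
        have t1 := (te j hj).mul (tVs.mul (tK lp hp k))
        rw [zero_mul] at t1
        have t2 := tendsto_finsetSum (Finset.univ) (fun i _ =>
          show Tendsto (fun x => et c (lam x) j * (if j < i then Am c μ (lam x) lp ls i k else 0)) l
          (𝓝 (if j < i then (if (i : ℕ) = k + 1 ∨ (k : ℕ) = i + 1 then - Xi μ L i else 0) else 0)) by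
          by_cases h1 : j < i
          · simp only [h1, if_true]
            exact tA j i k hj (Or.inr ⟨hkj, h1⟩)
          · simp only [h1, if_false, mul_zero]
            exact tendsto_const_nhds)
        have t3 := t1.sub t2
        rw [zero_sub] at t3
        refine t3.congr (fun x => ?_)
        rw [mul_sub, Finset.mul_sum]
      · simp only [hkj, if_false]
        have t2 := tendsto_finsetSum (Finset.univ) (fun i _ =>
          show Tendsto (fun x => et c (lam x) j * (if i ≤ j then Am c μ (lam x) lp ls i k else 0)) l
          (𝓝 (if i ≤ j then (if (i : ℕ) = k + 1 ∨ (k : ℕ) = i + 1 then - Xi μ L i else 0) else 0)) by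
          by_cases h1 : i ≤ j
          · simp only [h1, if_true]
            exact tA j i k hj (Or.inl ⟨h1, not_le.1 hkj⟩)
          · simp only [h1, if_false, mul_zero]
            exact tendsto_const_nhds)
        refine t2.congr (fun x => ?_)
        rw [Finset.mul_sum]

lemma str_diff (cb : ℝ) (c : ℂ) (hcdef : c = -(cb : ℂ)) {N : ℕ} (i k : Fin N) :
    stringRap cb N 0 i - stringRap cb N 0 k = I * c * ((i : ℂ) - k) := by
  unfold stringRap
  rw [hcdef]
  simp only [Pi.zero_apply]
  ring

lemma sum_fin_range {N : ℕ} (f : ℕ → ℂ) : ∑ j : Fin N, f j = ∑ j ∈ Finset.range N, f j :=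
  Fin.sum_univ_eq_sum_range f N

lemma s1 (N : ℕ) (a : ℂ) : ∑ j ∈ Finset.range N, (a - 2 * (j : ℂ)) = N * a - N * (N - 1) := by
  induction N with
  | zero => simp
  | succ n ih => rw [Finset.sum_range_succ, ih]; push_cast; ring

lemma s2 (N : ℕ) (a : ℂ) : ∑ j ∈ Finset.range N, (a - 2 * (j : ℂ)) ^ 2 =
    N * a ^ 2 - 2 * a * (N * (N - 1)) + 2 * (N * (N - 1) * (2 * N - 1)) / 3 := by
  induction N with
  | zero => simp
  | succ n ih => rw [Finset.sum_range_succ, ih]; push_cast; ring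

lemma s3 (N : ℕ) (a : ℂ) : ∑ j ∈ Finset.range N, (a - 2 * (j : ℂ)) ^ 3 =
    N * a ^ 3 - 3 * a ^ 2 * (N * (N - 1)) + 2 * a * (N * (N - 1) * (2 * N - 1))
      - 2 * (N * (N - 1)) ^ 2 := by
  induction N with
  | zero => simp
  | succ n ih => rw [Finset.sum_range_succ, ih]; push_cast; ring

lemma str_P (cb : ℝ) (N : ℕ) : ∑ j, stringRap cb N 0 j = 0 := by
  simp only [stringRap, Pi.zero_apply, mul_zero, add_zero]
  rw [← Finset.mul_sum, sum_fin_range (fun j => (N : ℂ) - 1 - 2 * (j : ℂ)), s1]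
  ring

lemma str_E (cb : ℝ) (N : ℕ) : ∑ j, stringRap cb N 0 j ^ 2 =
    - ((cb : ℂ) ^ 2 / 12 * N * ((N : ℂ) ^ 2 - 1)) := by
  simp only [stringRap, Pi.zero_apply, mul_zero, add_zero, mul_pow]
  rw [← Finset.mul_sum, sum_fin_range (fun j => ((N : ℂ) - 1 - 2 * (j : ℂ)) ^ 2), s2, I_sq]
  ring

lemma str_Q (cb : ℝ) (N : ℕ) : ∑ j, stringRap cb N 0 j ^ 3 = 0 := by
  simp only [stringRap, Pi.zero_apply, mul_zero, add_zero, mul_pow]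
  rw [← Finset.mul_sum, sum_fin_range (fun j => ((N : ℂ) - 1 - 2 * (j : ℂ)) ^ 3), s3]
  ring

lemma final_alg {n : ℕ} (c : ℂ) (hc : c ≠ 0) (μ L : Fin (n+1) → ℂ)
    (hL : ∀ i k : Fin (n+1), L i - L k = I * c * ((i : ℂ) - k))
    (hmu : ∀ k j, μ k ≠ L j) :
    (∏ j, ∏ k, Hm c L j k) * (∏ j, ∏ k, (L j - μ k)⁻¹) *
      (I * ∏ j : Fin n, Xi μ L j.succ) / Xi μ L (Fin.last n) =
    c * c ^ (2 * n) * ((n : ℂ) + 1) * (n.factorial : ℂ) ^ 2 /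
      ∏ m, ((μ m - L 0) * (μ m - L (Fin.last n))) := by
  classical
  set num : Fin (n+1) → ℂ := fun j => ∏ m, (μ m - L j) with hnum
  set den : Fin (n+1) → ℂ := fun j => ∏ m ∈ Finset.univ.erase j, (L m - L j) with hden
  have hX : ∀ j, Xi μ L j = num j / den j := fun j => rfl
  have hn0 : ∀ j, num j ≠ 0 := fun j =>
    Finset.prod_ne_zero_iff.2 (fun m _ => sub_ne_zero.2 (hmu _ _))
  have hd0 : ∀ j, den j ≠ 0 := by
    intro j
    refine Finset.prod_ne_zero_iff.2 (fun m hm => ?_)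
    rw [hL]
    refine mul_ne_zero (mul_ne_zero I_ne_zero hc) (sub_ne_zero.2 ?_)
    exact_mod_cast fun h => (Finset.mem_erase.1 hm).1 (Fin.ext h)
  -- rows of H
  have hrow : ∀ i : Fin n, ∏ k, Hm c L i.castSucc k = (-1) ^ n * den i.succ := by
    intro i
    rw [← Finset.mul_prod_erase _ _ (Finset.mem_univ i.succ)]
    have : Hm c L i.castSucc i.succ = 1 := by simp [Hm]
    rw [this, one_mul, hden]
    simp only
    rw [show ((-1 : ℂ)) ^ n = ∏ _m ∈ (Finset.univ.erase i.succ : Finset (Fin (n+1))), (-1 : ℂ) by simp,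
      ← Finset.prod_mul_distrib]
    refine Finset.prod_congr rfl (fun k hk => ?_)
    have hk' : (k : ℕ) ≠ i + 1 := fun h => (Finset.mem_erase.1 hk).1 (Fin.ext (by simpa using h))
    simp only [Hm, Fin.val_castSucc, if_neg hk', hL, Fin.val_succ]
    push_cast
    ring
  have hlastrow : ∏ k, Hm c L (Fin.last n) k = (I * c) ^ (n+1) * ((n+1).factorial : ℂ) := by
    have : ∀ k : Fin (n+1), Hm c L (Fin.last n) k = (I * c) * ((((n + 1 - k : ℕ)) : ℂ)) := by
      intro k
      have hk := k.isLt
      rw [Hm, if_neg (by simp only [Fin.val_last]; omega), hL, Nat.cast_sub hk.le, Fin.val_last]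
      push_cast
      ring
    simp only [this]
    rw [Finset.prod_mul_distrib]
    congr 1
    · simp
    · rw [← Nat.cast_prod]
      congr 1
      rw [Fin.prod_univ_eq_prod_range (fun k => n + 1 - k) (n+1)]
      rw [← Finset.prod_range_add_one_eq_factorial, ← Finset.prod_range_reflect]
      refine Finset.prod_congr rfl (fun k hk => ?_)
      have := Finset.mem_range.1 hk
      omega
  have hdl : den (Fin.last n) = (I * c) ^ n * ((-1) ^ n * (n.factorial : ℂ)) := by
    have e : den (Fin.last n) = ∏ i : Fin n, (L i.castSucc - L (Fin.last n)) := by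
      simp only [hden]
      rw [← Finset.prod_image (s := (Finset.univ : Finset (Fin n))) (g := Fin.castSucc)
        (f := fun m => L m - L (Fin.last n)) (Fin.castSucc_injective n).injOn]
      refine Finset.prod_congr ?_ (fun _ _ => rfl)
      ext m
      simp [← Fin.exists_castSucc_eq]
    rw [e]
    have : ∀ i : Fin n, L i.castSucc - L (Fin.last n) = (I * c) * ((-1) * (((n - i : ℕ)) : ℂ)) := by
      intro k
      rw [hL, Nat.cast_sub k.isLt.le, Fin.val_last, Fin.val_castSucc]
      ring
    simp only [this]
    rw [Finset.prod_mul_distrib, Finset.prod_const, Finset.prod_mul_distrib]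
    congr 1
    · simp
    congr 1
    · simp
    · rw [← Nat.cast_prod]
      congr 1
      rw [Fin.prod_univ_eq_prod_range (fun k => n - k) n]
      rw [← Finset.prod_range_add_one_eq_factorial, ← Finset.prod_range_reflect]
      refine Finset.prod_congr rfl (fun k hk => ?_)
      have := Finset.mem_range.1 hk
      omega
  have hinv : ∀ j, ∏ k, (L j - μ k)⁻¹ = (-1) ^ (n+1) * (num j)⁻¹ := by
    intro j
    rw [hnum, ← Finset.prod_inv_distrib,
      show ((-1 : ℂ)) ^ (n+1) = ∏ _m : Fin (n+1), (-1 : ℂ) by simp, ← Finset.prod_mul_distrib]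
    refine Finset.prod_congr rfl (fun k _ => ?_)
    rw [← neg_sub, inv_neg]; ring
  have hHH : ∏ j, ∏ k, Hm c L j k = ((-1) ^ n) ^ n * (∏ i : Fin n, den i.succ) *
      ((I * c) ^ (n+1) * ((n+1).factorial : ℂ)) := by
    rw [Fin.prod_univ_castSucc, hlastrow]
    simp only [hrow]
    rw [Finset.prod_mul_distrib]
    simp
  have hII : ∏ j, ∏ k, (L j - μ k)⁻¹ = ((-1) ^ (n+1)) ^ (n+1) * ((num 0)⁻¹ * (∏ i : Fin n, num i.succ)⁻¹) := by
    simp only [hinv]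
    rw [Finset.prod_mul_distrib, Finset.prod_inv_distrib, Fin.prod_univ_succ num, mul_inv]
    simp
  have hXX : ∏ j : Fin n, Xi μ L j.succ = (∏ i : Fin n, num i.succ) * (∏ i : Fin n, den i.succ)⁻¹ := by
    simp only [hX]
    rw [Finset.prod_div_distrib, div_eq_mul_inv]
  have hpd : (∏ i : Fin n, den i.succ) ≠ 0 := Finset.prod_ne_zero_iff.2 (fun i _ => hd0 _)
  have hpn : (∏ i : Fin n, num i.succ) ≠ 0 := Finset.prod_ne_zero_iff.2 (fun i _ => hn0 _)
  rw [hHH, hII, hXX, hX, Finset.prod_mul_distrib]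
  change _ = _ / (num 0 * num (Fin.last n))
  have h00 := hn0 0
  have h0l := hn0 (Fin.last n)
  have hdl0 := hd0 (Fin.last n)
  rw [div_div_eq_mul_div, div_eq_div_iff h0l (mul_ne_zero h00 h0l)]
  rw [hdl]
  have sgn : (((-1 : ℂ)) ^ n) ^ n * ((-1) ^ (n+1)) ^ (n+1) = -1 := by
    rw [← pow_mul, ← pow_mul, ← pow_add]
    apply Odd.neg_one_pow
    exact ⟨n * n + n, by ring⟩
  have hI : (I * c) ^ (n+1) * I * (I * c) ^ n * (-1) ^ n = - (c * c ^ (2 * n)) := by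
    have : (I * c) ^ (n+1) * I * (I * c) ^ n * (-1) ^ n = (I ^ 2) * ((I ^ 2) ^ n * (-1) ^ n) * (c * c ^ (2*n)) := by
      ring
    rw [this, I_sq, ← mul_pow]; simp
  have hfac : ((n+1).factorial : ℂ) = ((n : ℂ) + 1) * n.factorial := by
    rw [Nat.factorial_succ]; push_cast; ring
  rw [hfac]
  calc _ = ((((-1 : ℂ)) ^ n) ^ n * ((-1) ^ (n+1)) ^ (n+1)) *
        ((I * c) ^ (n+1) * I * (I * c) ^ n * (-1) ^ n) *
        (((n : ℂ) + 1) * (n.factorial : ℂ) ^ 2) *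
        ((∏ i : Fin n, den i.succ) * (∏ i : Fin n, den i.succ)⁻¹) *
        ((∏ i : Fin n, num i.succ) * (∏ i : Fin n, num i.succ)⁻¹) *
        (num 0 * (num 0)⁻¹) * num (Fin.last n) := by ring
    _ = _ := by
      rw [sgn, hI, mul_inv_cancel₀ hpd, mul_inv_cancel₀ hpn, mul_inv_cancel₀ h00]
      ring

/-- Attractive-regime (vanishing string deviation) limit of the determinant formula `F`
for the form factor of `(Ψ†(0))²Ψ²(0)` between the `N`-string ground state
(`c = −c̄ < 0`) and a state with rapidities `μ₁,…,μ_N`. -/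
theorem F_string_limit {N : ℕ} (hN : 1 ≤ N) (cb : ℝ) (hcb : 0 < cb)
    (c : ℂ) (hcdef : c = -(cb : ℂ))
    (μ : Fin N → ℂ)
    (hmu1 : ∀ m : Fin N, μ m ^ 2 + (cb : ℂ) ^ 2 / 4 * ((N : ℂ) - 1) ^ 2 ≠ 0)
    (hmu2 : ∀ k j : Fin N, μ k ≠ stringRap cb N 0 j)
    (lp ls : ℂ)
    (hp1 : ∀ j, (lp - stringRap cb N 0 j) ^ 2 + c ^ 2 ≠ 0)
    (hs1 : ∀ j, (ls - stringRap cb N 0 j) ^ 2 + c ^ 2 ≠ 0) :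
    Filter.Tendsto
      (fun δ : Fin N → ℂ => Fff c μ (stringRap cb N δ) lp ls)
      (nhdsWithin 0
        {δ : Fin N → ℂ |
          Function.Injective (stringRap cb N δ) ∧
          (∀ k j, μ k ≠ stringRap cb N δ j) ∧
          (∀ j k, stringRap cb N δ j - stringRap cb N δ k + I * c ≠ 0 ∧
            stringRap cb N δ j - stringRap cb N δ k - I * c ≠ 0) ∧
          (∀ j, Vp c μ (stringRap cb N δ) (stringRap cb N δ j) ≠
            Vm c μ (stringRap cb N δ) (stringRap cb N δ j)) ∧
          Vp c μ (stringRap cb N δ) lp ≠ Vm c μ (stringRap cb N δ) lp ∧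
          Vp c μ (stringRap cb N δ) ls ≠ Vm c μ (stringRap cb N δ) ls ∧
          (∀ j, (lp - stringRap cb N δ j) ^ 2 + c ^ 2 ≠ 0) ∧
          (∀ j, (ls - stringRap cb N δ j) ^ 2 + c ^ 2 ≠ 0)})
      (nhds ((-1 : ℂ) ^ N * (c ^ (2 * (N - 1)) / 6) *
        ((∑ m, μ m) ^ 4 - 4 * (∑ m, μ m) * (∑ m, μ m ^ 3) +
          3 * (∑ m, μ m ^ 2 + (cb : ℂ) ^ 2 / 12 * (N : ℂ) * ((N : ℂ) ^ 2 - 1)) ^ 2) *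
        (N : ℂ) * (((N - 1).factorial : ℂ)) ^ 2 /
        ∏ m : Fin N, (μ m ^ 2 + (cb : ℂ) ^ 2 / 4 * ((N : ℂ) - 1) ^ 2))) := by
  obtain ⟨n, rfl⟩ : ∃ n, N = n + 1 := ⟨N - 1, by omega⟩
  have hc : c ≠ 0 := by
    rw [hcdef, neg_ne_zero]
    exact_mod_cast hcb.ne'
  have hL := fun i k : Fin (n+1) => str_diff cb c hcdef i k
  set l := nhdsWithin (0 : Fin (n+1) → ℂ) _ with hl
  have hlim : ∀ j, Filter.Tendsto (fun δ : Fin (n+1) → ℂ => stringRap cb (n+1) δ j) l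
      (nhds (stringRap cb (n+1) 0 j)) := by
    intro j
    have hcont : Continuous (fun δ : Fin (n+1) → ℂ => stringRap cb (n+1) δ j) := by
      unfold stringRap
      fun_prop
    exact (hcont.tendsto 0).mono_left nhdsWithin_le_nhds
  have hgood := self_mem_nhdsWithin (a := (0 : Fin (n+1) → ℂ)) (s := {δ : Fin (n+1) → ℂ |
          Function.Injective (stringRap cb (n+1) δ) ∧
          (∀ k j, μ k ≠ stringRap cb (n+1) δ j) ∧
          (∀ j k, stringRap cb (n+1) δ j - stringRap cb (n+1) δ k + I * c ≠ 0 ∧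
            stringRap cb (n+1) δ j - stringRap cb (n+1) δ k - I * c ≠ 0) ∧
          (∀ j, Vp c μ (stringRap cb (n+1) δ) (stringRap cb (n+1) δ j) ≠
            Vm c μ (stringRap cb (n+1) δ) (stringRap cb (n+1) δ j)) ∧
          Vp c μ (stringRap cb (n+1) δ) lp ≠ Vm c μ (stringRap cb (n+1) δ) lp ∧
          Vp c μ (stringRap cb (n+1) δ) ls ≠ Vm c μ (stringRap cb (n+1) δ) ls ∧
          (∀ j, (lp - stringRap cb (n+1) δ j) ^ 2 + c ^ 2 ≠ 0) ∧
          (∀ j, (ls - stringRap cb (n+1) δ j) ^ 2 + c ^ 2 ≠ 0)})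
  rw [← hl] at hgood
  have tdet := lim_det l c hc μ (fun δ => stringRap cb (n+1) δ) (stringRap cb (n+1) 0) lp ls hL hlim
    hp1 hs1 (by filter_upwards [hgood] with δ hδ using hδ.2.2.1)
  have tJ : Filter.Tendsto (fun δ => Jcal μ (stringRap cb (n+1) δ)) l
      (nhds (Jcal μ (stringRap cb (n+1) 0))) := by
    have tp : ∀ p : ℕ, Filter.Tendsto (fun δ => ∑ j, stringRap cb (n+1) δ j ^ p) l
        (nhds (∑ j, stringRap cb (n+1) 0 j ^ p)) := fun p =>
      tendsto_finsetSum _ (fun j _ => (hlim j).pow p)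
    have t1 : Filter.Tendsto (fun δ => ∑ j, stringRap cb (n+1) δ j) l
        (nhds (∑ j, stringRap cb (n+1) 0 j)) := tendsto_finsetSum _ (fun j _ => hlim j)
    unfold Jcal
    exact (((t1.sub_const _).pow 4).sub (((t1.sub_const _).const_mul 4).mul ((tp 3).sub_const _))).add
      ((((tp 2).sub_const _).pow 2).const_mul 3)
  have tH : Filter.Tendsto (fun δ => ∏ j, ∏ k, Hm c (stringRap cb (n+1) δ) j k) l
      (nhds (∏ j, ∏ k, Hm c (stringRap cb (n+1) 0) j k)) := by
    refine tendsto_finsetProd _ (fun j _ => tendsto_finsetProd _ (fun k _ => ?_))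
    unfold Hm
    split_ifs
    · exact tendsto_const_nhds
    · exact ((hlim j).sub (hlim k)).add_const _
  have tI : Filter.Tendsto (fun δ => ∏ j, ∏ k, (stringRap cb (n+1) δ j - μ k)⁻¹) l
      (nhds (∏ j, ∏ k, (stringRap cb (n+1) 0 j - μ k)⁻¹)) := by
    refine tendsto_finsetProd _ (fun j _ => tendsto_finsetProd _ (fun k _ => ?_))
    exact ((hlim j).sub_const _).inv₀ (sub_ne_zero.2 (hmu2 k j).symm)
  have hLne : ∀ i k : Fin (n+1), i ≠ k → stringRap cb (n+1) 0 i - stringRap cb (n+1) 0 k ≠ 0 := by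
    intro i k hik
    rw [hL]
    refine mul_ne_zero (mul_ne_zero I_ne_zero hc) (sub_ne_zero.2 ?_)
    exact_mod_cast fun h => hik (Fin.ext h)
  have hden : ∏ m ∈ Finset.univ.erase (Fin.last n),
      (stringRap cb (n+1) 0 m - stringRap cb (n+1) 0 (Fin.last n)) ≠ 0 :=
    Finset.prod_ne_zero_iff.2 (fun m hm => hLne _ _ (Finset.mem_erase.1 hm).1)
  have hX0 : Xi μ (stringRap cb (n+1) 0) (Fin.last n) ≠ 0 := by
    unfold Xi
    exact div_ne_zero (Finset.prod_ne_zero_iff.2 (fun m _ => sub_ne_zero.2 (hmu2 _ _))) hden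
  have tX : Filter.Tendsto (fun δ => Xi μ (stringRap cb (n+1) δ) (Fin.last n)) l
      (nhds (Xi μ (stringRap cb (n+1) 0) (Fin.last n))) := by
    unfold Xi
    exact Filter.Tendsto.div (tendsto_finsetProd _ (fun m _ => (hlim _).const_sub _))
      (tendsto_finsetProd _ (fun m _ => (hlim m).sub (hlim _))) hden
  have tot := (((((tJ.div_const (6 * c)).const_mul ((-1 : ℂ) ^ (n+1))).mul tH).mul tI).mul tdet).div tX hX0
  have hval : (-1 : ℂ) ^ (n+1) * (Jcal μ (stringRap cb (n+1) 0) / (6 * c)) *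
      (∏ j, ∏ k, Hm c (stringRap cb (n+1) 0) j k) * (∏ j, ∏ k, (stringRap cb (n+1) 0 j - μ k)⁻¹) *
      (I * ∏ j : Fin n, Xi μ (stringRap cb (n+1) 0) j.succ) / Xi μ (stringRap cb (n+1) 0) (Fin.last n) =
      ((-1 : ℂ) ^ (n+1) * (c ^ (2 * (n + 1 - 1)) / 6) *
        ((∑ m, μ m) ^ 4 - 4 * (∑ m, μ m) * (∑ m, μ m ^ 3) +
          3 * (∑ m, μ m ^ 2 + (cb : ℂ) ^ 2 / 12 * ((n + 1 : ℕ) : ℂ) * (((n + 1 : ℕ) : ℂ) ^ 2 - 1)) ^ 2) *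
        ((n + 1 : ℕ) : ℂ) * (((n + 1 - 1).factorial : ℂ)) ^ 2 /
        ∏ m : Fin (n+1), (μ m ^ 2 + (cb : ℂ) ^ 2 / 4 * (((n + 1 : ℕ) : ℂ) - 1) ^ 2)) := by
    have hfa := final_alg c hc μ (stringRap cb (n+1) 0) hL hmu2
    have hprod : ∏ m, ((μ m - stringRap cb (n+1) 0 0) * (μ m - stringRap cb (n+1) 0 (Fin.last n))) =
        ∏ m : Fin (n+1), (μ m ^ 2 + (cb : ℂ) ^ 2 / 4 * (((n + 1 : ℕ) : ℂ) - 1) ^ 2) := by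
      refine Finset.prod_congr rfl (fun m _ => ?_)
      simp only [stringRap, Pi.zero_apply, Fin.val_zero, Fin.val_last]
      push_cast
      linear_combination (-((cb : ℂ) ^ 2 / 4 * n ^ 2)) * I_sq
    rw [hprod] at hfa
    have hJ : Jcal μ (stringRap cb (n+1) 0) = (∑ m, μ m) ^ 4 - 4 * (∑ m, μ m) * (∑ m, μ m ^ 3) +
          3 * (∑ m, μ m ^ 2 + (cb : ℂ) ^ 2 / 12 * ((n + 1 : ℕ) : ℂ) * (((n + 1 : ℕ) : ℂ) ^ 2 - 1)) ^ 2 := by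
      unfold Jcal
      rw [str_P, str_E, str_Q]
      ring
    have e : ∀ a b d f g x : ℂ, a * b * d * f * g / x = a * b * (d * f * g / x) := by
      intros; ring
    rw [e, hfa, hJ, Nat.add_sub_cancel]
    push_cast
    field_simp
  rw [← hval]
  refine tot.congr' ?_
  filter_upwards [hgood] with δ hδ
  obtain ⟨a1, a2, a3, a4, a5, a6, a7, a8⟩ := hδ
  exact (exact_F c hc μ _ lp ls a1 a2 a3 a4 a5 a6 a7 a8).symm
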